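/- Let trans : σ → L → σ → Prop be a deterministic labeled transition system and let s, t be states. Then PairClosure s t, the least relation containing (s, t) and closed under simultaneous labeled steps, is contained in every simulation S with S s t. Consequently, in a deterministic LTS, if there exists any simulation containing (s, t), then for every pair (u, v) in PairClosure s t and every transition u →α u' there exists v' with v →α v' (i.e., the paper's similarity checker succeeds). -/

import Mathlib

/-- The LTS `trans` is deterministic: each state and label has at most one successor. -/
def Deterministic {σ L : Type*} (trans : σ → L → σ → Prop) : Prop :=
  ∀ u α u' u'', trans u α u' → trans u α u'' → u' = u''

/-- `R` is a simulation for the LTS `trans`. -/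
def IsSimulation {σ L : Type*} (trans : σ → L → σ → Prop) (R : σ → σ → Prop) : Prop :=
  ∀ u v, R u v → ∀ α u', trans u α u' → ∃ v', trans v α v' ∧ R u' v'

/-- `PairClosure trans s t` is the least relation containing `(s, t)` and closed under
simultaneous labeled steps of the LTS `trans`. -/
inductive PairClosure {σ L : Type*} (trans : σ → L → σ → Prop) (s t : σ) : σ → σ → Prop
  | base : PairClosure trans s t s t
  | step {u v u' v' : σ} {α : L} : PairClosure trans s t u v →
      trans u α u' → trans v α v' → PairClosure trans s t u' v'

/-- The state `v` is deterministic: it has at most one successor for each label. Asking this of the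
right-hand states of a `PairClosure` leaves the left-hand side free to branch. -/
def DeterministicAt {σ L : Type*} (trans : σ → L → σ → Prop) (v : σ) : Prop :=
  ∀ α v' v'', trans v α v' → trans v α v'' → v' = v''

section

variable {σ L : Type*} {trans : σ → L → σ → Prop} {S : σ → σ → Prop} {s t u v u' v' : σ} {α : L}

-- The successor of `v` with which the simulation answers can only be `v'`.
theorem IsSimulation.rel_of_trans (hS : IsSimulation trans S) (hdet : DeterministicAt trans v)
    (huv : S u v) (hu : trans u α u') (hv : trans v α v') : S u' v' := by
  obtain ⟨w, hw, hSw⟩ := hS u v huv α u' hu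
  rwa [hdet α v' w hv hw]

theorem PairClosure.rel_of_isSimulation
    (hdet : ∀ u v, PairClosure trans s t u v → DeterministicAt trans v)
    (hS : IsSimulation trans S) (hst : S s t) (h : PairClosure trans s t u v) : S u v := by
  induction h with
  | base => exact hst
  | step huv hu hv ih => exact hS.rel_of_trans (hdet _ _ huv) ih hu hv

theorem PairClosure.isSimulation_of_le (hS : IsSimulation trans S)
    (hle : ∀ u v, PairClosure trans s t u v → S u v) :
    IsSimulation trans (PairClosure trans s t) := by
  intro u v huv α u' hu
  obtain ⟨v', hv, -⟩ := hS u v (hle u v huv) α u' hu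
  exact ⟨v', hv, huv.step hu hv⟩

end

theorem pairClosure_least_general {σ L : Type*} (trans : σ → L → σ → Prop) (s t : σ)
    (hdet : ∀ u v, PairClosure trans s t u v → DeterministicAt trans v) :
    (∀ S : σ → σ → Prop, IsSimulation trans S → S s t →
      ∀ u v, PairClosure trans s t u v → S u v) ∧
    ((∃ S : σ → σ → Prop, IsSimulation trans S ∧ S s t) →
      IsSimulation trans (PairClosure trans s t)) := by
  have hle : ∀ S : σ → σ → Prop, IsSimulation trans S → S s t →
      ∀ u v, PairClosure trans s t u v → S u v :=
    fun _ hS hst _ _ => PairClosure.rel_of_isSimulation hdet hS hst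
  exact ⟨hle, fun ⟨S, hS, hst⟩ => PairClosure.isSimulation_of_le hS (hle S hS hst)⟩

/-- In a deterministic LTS, `PairClosure trans s t` is contained in every simulation `S`
with `S s t`; consequently, if some simulation relates `s` to `t`, then at every pair of
`PairClosure trans s t` every move of the left state is matched by a move of the right
state (the similarity checker succeeds). -/
theorem pairClosure_least {σ L : Type*} (trans : σ → L → σ → Prop)
    (hdet : Deterministic trans) (s t : σ) :
    (∀ S : σ → σ → Prop, IsSimulation trans S → S s t →
      ∀ u v, PairClosure trans s t u v → S u v) ∧
    ((∃ S : σ → σ → Prop, IsSimulation trans S ∧ S s t) →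
      ∀ u v, PairClosure trans s t u v →
        ∀ α u', trans u α u' → ∃ v', trans v α v') := by
  obtain ⟨hle, hsim⟩ := pairClosure_least_general trans s t fun _ v _ => hdet v
  exact ⟨hle, fun hS u v huv α u' hu => (hsim hS u v huv α u' hu).imp fun _ => And.left⟩
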